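/- Let λ₁,…,λ_s ∈ 𝕋 have the property that their only multiplicative relation is trivial, i.e., λ₁^{n₁}⋯λ_s^{n_s} = 1 with n_i ∈ ℤ implies n₁ = … = n_s = 0. Then the orbit { (λ₁ⁿ,…,λ_sⁿ) : n ∈ ℕ } is dense in the full torus 𝕋^s. -/

import Mathlib

open MeasureTheory Filter Topology UnitAddTorus in
/-- Weyl equidistribution for characters on the torus. -/
theorem weyl_aux {s : ℕ} (a : UnitAddTorus (Fin s))
    (ha : ∀ n : Fin s → ℤ, mFourier n a = 1 → n = 0)
    (μ : Measure (UnitAddTorus (Fin s))) [IsProbabilityMeasure μ] [μ.IsAddLeftInvariant]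
    (f : C(UnitAddTorus (Fin s), ℂ)) :
    Tendsto (fun N : ℕ => (N : ℂ)⁻¹ * ∑ k ∈ Finset.range N, f (k • a) - ∫ x, f x ∂μ)
      atTop (𝓝 0) := by
  have hInteg : ∀ g : C(UnitAddTorus (Fin s), ℂ), Integrable (fun x => g x) μ := fun g =>
    g.continuous.integrable_of_hasCompactSupport (HasCompactSupport.of_compactSpace _)
  have hadd : ∀ (n : Fin s → ℤ) (x y : UnitAddTorus (Fin s)),
      mFourier n (x + y) = mFourier n x * mFourier n y := by
    intro n x y
    simp [mFourier, smul_add, AddCircle.toCircle_add, Finset.prod_mul_distrib]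
  have hzero : ∀ n : Fin s → ℤ, mFourier n (0 : UnitAddTorus (Fin s)) = 1 := by
    intro n
    simp [mFourier]
  have hnsmul : ∀ (n : Fin s → ℤ) (k : ℕ), mFourier n (k • a) = mFourier n a ^ k := by
    intro n k
    induction k with
    | zero => rw [zero_smul, hzero, pow_zero]
    | succ k ih => rw [succ_nsmul, hadd, ih, pow_succ]
  have hspan : ∀ g ∈ Submodule.span ℂ (Set.range (mFourier (d := Fin s))),
      Tendsto (fun N : ℕ => (N : ℂ)⁻¹ * ∑ k ∈ Finset.range N, g (k • a) - ∫ x, g x ∂μ)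
        atTop (𝓝 0) := by
    intro g hg
    induction hg using Submodule.span_induction with
    | mem g hg =>
      obtain ⟨n, rfl⟩ := hg
      by_cases hn : n = 0
      · subst hn
        rw [mFourier_zero]
        apply tendsto_const_nhds.congr'
        filter_upwards [eventually_gt_atTop 0] with N hN
        have : (N : ℂ) ≠ 0 := by exact_mod_cast hN.ne'
        simp [this]
      · have h1 : mFourier n a ≠ 1 := fun h => hn (ha n h)
        have hI : ∫ x, mFourier n x ∂μ = 0 := by
          have h2 := integral_add_left_eq_self (μ := μ) (fun x => mFourier n x) a
          simp only [hadd] at h2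
          rw [integral_const_mul] at h2
          have h3 : (mFourier n a - 1) * ∫ x, mFourier n x ∂μ = 0 := by
            rw [sub_mul, h2, one_mul, sub_self]
          exact (mul_eq_zero.1 h3).resolve_left (sub_ne_zero.2 h1)
        simp only [hI, hnsmul, sub_zero]
        have hna : ‖mFourier n a‖ ≤ 1 := by
          exact ((mFourier n).norm_coe_le_norm a).trans mFourier_norm.le
        refine squeeze_zero_norm (a := fun N : ℕ => (N : ℝ)⁻¹ * (2 / ‖mFourier n a - 1‖)) ?_ ?_
        · intro N
          rw [geom_sum_eq h1, norm_mul, norm_inv, Complex.norm_natCast, norm_div]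
          gcongr
          calc ‖mFourier n a ^ N - 1‖ ≤ ‖mFourier n a ^ N‖ + ‖(1 : ℂ)‖ := norm_sub_le _ _
            _ ≤ 1 + 1 := by
              rw [norm_pow, norm_one]
              gcongr
              exact pow_le_one₀ (norm_nonneg _) hna
            _ = 2 := by norm_num
        · simpa using (tendsto_inv_atTop_nhds_zero_nat (𝕜 := ℝ)).mul_const (2 / ‖mFourier n a - 1‖)
    | zero => simp
    | add g h _ _ hg hh =>
      have := hg.add hh
      rw [add_zero] at this
      refine this.congr fun N => ?_
      simp only [ContinuousMap.add_apply]
      rw [integral_add (hInteg g) (hInteg h), Finset.sum_add_distrib]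
      ring
    | smul c g _ hg =>
      have := hg.const_mul c
      rw [mul_zero] at this
      refine this.congr fun N => ?_
      simp only [ContinuousMap.smul_apply, smul_eq_mul]
      rw [integral_const_mul, ← Finset.mul_sum]
      ring
  have hf : f ∈ closure (Submodule.span ℂ (Set.range (mFourier (d := Fin s))) : Set _) := by
    rw [← Submodule.topologicalClosure_coe, span_mFourier_closure_eq_top]
    trivial
  rw [Metric.tendsto_atTop]
  intro ε hε
  obtain ⟨g, hg, hfg⟩ := Metric.mem_closure_iff.1 hf (ε / 3) (by positivity)
  obtain ⟨M, hM⟩ := Metric.tendsto_atTop.1 (hspan g hg) (ε / 3) (by positivity)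
  refine ⟨M, fun N hN => ?_⟩
  have h1 := hM N hN
  rw [dist_zero_right] at h1 ⊢
  rw [dist_eq_norm] at hfg
  have hb : ∀ x, ‖f x - g x‖ ≤ ‖f - g‖ := fun x => (f - g).norm_coe_le_norm x
  have hA : ‖(N : ℂ)⁻¹ * ∑ k ∈ Finset.range N, (f (k • a) - g (k • a))‖ ≤ ‖f - g‖ := by
    rw [norm_mul, norm_inv, Complex.norm_natCast]
    have : ‖∑ k ∈ Finset.range N, (f (k • a) - g (k • a))‖ ≤ N * ‖f - g‖ := by
      refine (norm_sum_le _ _).trans ?_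
      refine (Finset.sum_le_sum fun k _ => hb (k • a)).trans ?_
      simp
    rcases Nat.eq_zero_or_pos N with h0 | h0
    · subst h0; simp
    · have h0' : (0 : ℝ) < N := by exact_mod_cast h0
      rw [inv_mul_le_iff₀ h0']
      exact this
  have hB : ‖∫ x, (f x - g x) ∂μ‖ ≤ ‖f - g‖ := by
    simpa using norm_integral_le_of_norm_le_const (μ := μ) (Eventually.of_forall hb)
  have heq : (N : ℂ)⁻¹ * ∑ k ∈ Finset.range N, f (k • a) - ∫ x, f x ∂μ =
      ((N : ℂ)⁻¹ * ∑ k ∈ Finset.range N, g (k • a) - ∫ x, g x ∂μ) +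
      ((N : ℂ)⁻¹ * ∑ k ∈ Finset.range N, (f (k • a) - g (k • a)) - ∫ x, (f x - g x) ∂μ) := by
    rw [integral_sub (hInteg f) (hInteg g), Finset.sum_sub_distrib]
    ring
  rw [heq]
  have h2 := norm_add_le ((N : ℂ)⁻¹ * ∑ k ∈ Finset.range N, g (k • a) - ∫ x, g x ∂μ)
    ((N : ℂ)⁻¹ * ∑ k ∈ Finset.range N, (f (k • a) - g (k • a)) - ∫ x, (f x - g x) ∂μ)
  have h3 := norm_sub_le ((N : ℂ)⁻¹ * ∑ k ∈ Finset.range N, (f (k • a) - g (k • a)))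
    (∫ x, (f x - g x) ∂μ)
  linarith

open MeasureTheory Filter Topology UnitAddTorus in
theorem dense_aux {s : ℕ} (a : UnitAddTorus (Fin s))
    (ha : ∀ n : Fin s → ℤ, mFourier n a = 1 → n = 0) :
    Dense (Set.range fun k : ℕ => k • a) := by
  intro x
  by_contra hx
  obtain ⟨f, hf0, hf1, hf⟩ := exists_continuous_zero_one_of_isClosed
    (isClosed_closure (s := Set.range fun k : ℕ => k • a)) (isClosed_singleton (x := x))
    (Set.disjoint_singleton_right.2 hx)
  let μ : Measure (UnitAddTorus (Fin s)) := Measure.pi fun _ => AddCircle.haarAddCircle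
  have hpos : 0 < ∫ y, f y ∂μ :=
    f.continuous.integral_pos_of_hasCompactSupport_nonneg_nonzero
      (HasCompactSupport.of_compactSpace _) (fun y => (hf y).1) (x := x)
      (by rw [hf1 rfl]; exact one_ne_zero)
  have h := weyl_aux a ha μ ⟨fun y => (f y : ℂ), by fun_prop⟩
  have hz : ∀ k : ℕ, f (k • a) = 0 := fun k => hf0 (subset_closure ⟨k, rfl⟩)
  simp only [ContinuousMap.coe_mk, hz, integral_complex_ofReal] at h
  simp at h
  exact hpos.ne' h

theorem orbit_dense_of_multiplicatively_independent (s : ℕ) (lam : Fin s → ℂ)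
    (hlam : ∀ i, ‖lam i‖ = 1)
    (hindep : ∀ n : Fin s → ℤ, (∏ i, lam i ^ n i) = 1 → ∀ i, n i = 0) :
    closure {z : Fin s → ℂ | ∃ n : ℕ, z = fun i => lam i ^ n} =
      {μ : Fin s → ℂ | ∀ i, ‖μ i‖ = 1} := by
  have key : ∀ ν : Fin s → ℂ, (∀ i, ‖ν i‖ = 1) →
      ∃ x : UnitAddTorus (Fin s), ∀ i, (AddCircle.toCircle (x i) : ℂ) = ν i := by
    intro ν hν
    refine ⟨fun i => (AddCircle.homeomorphCircle one_ne_zero).symm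
      ⟨ν i, mem_sphere_zero_iff_norm.2 (hν i)⟩, fun i => ?_⟩
    rw [← AddCircle.homeomorphCircle_apply one_ne_zero]
    exact congrArg Subtype.val (Homeomorph.apply_symm_apply _ _)
  apply Set.Subset.antisymm
  · apply closure_minimal
    · rintro _ ⟨n, rfl⟩ i
      simp [hlam]
    · simp only [Set.ofPred_forall]
      exact isClosed_iInter fun i => isClosed_eq (by fun_prop) continuous_const
  · intro ν hν
    obtain ⟨a, ha⟩ := key lam hlam
    obtain ⟨x, hx⟩ := key ν hν
    have hd := dense_aux a (by
      intro n hn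
      funext i
      refine hindep n ?_ i
      rw [← hn]
      simp [UnitAddTorus.mFourier, AddCircle.toCircle_zsmul, ha])
    let φ : UnitAddTorus (Fin s) → (Fin s → ℂ) := fun y i => (AddCircle.toCircle (y i) : ℂ)
    have hφ : Continuous φ := continuous_pi fun i =>
      continuous_subtype_val.comp (AddCircle.continuous_toCircle.comp (continuous_apply i))
    have hνx : ν = φ x := funext fun i => (hx i).symm
    rw [hνx]
    refine closure_mono ?_ (image_closure_subset_closure_image hφ ⟨x, hd x, rfl⟩)
    rintro _ ⟨_, ⟨k, rfl⟩, rfl⟩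
    refine ⟨k, funext fun i => ?_⟩
    simp [φ, AddCircle.toCircle_nsmul, ha]
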